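/- There exists a unique family B : ℕ⁴ → S such that for every a ∈ ℕ⁴: (i) B[a] − E[a] ∈ Σ_{b ∈ S(a)} qℤ[q]·E[b], and (ii) σ(B[a]) = q^{−N(a)}B[a]. Moreover the family {B[a] : a ∈ ℕ⁴} is an F-basis of S (the dual canonical basis). -/

import Mathlib

noncomputable section

abbrev F : Type := RatFunc ℚ

/-- The deformation parameter `q`. -/
def qq : F := RatFunc.X

/-- The quantum integer `[3] = q² + 1 + q⁻²`. -/
def box3 : F := qq ^ 2 + 1 + (qq⁻¹) ^ 2

/-- The generators `E₁, E₂` of the free algebra. -/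
def gen (i : Fin 2) : FreeAlgebra F (Fin 2) := FreeAlgebra.ι F i

/-- The quantized Serre relations. -/
inductive SerreRel : FreeAlgebra F (Fin 2) → FreeAlgebra F (Fin 2) → Prop
  | rel1 : SerreRel
      (gen 0 ^ 3 * gen 1 - box3 • (gen 0 ^ 2 * gen 1 * gen 0)
        + box3 • (gen 0 * gen 1 * gen 0 ^ 2) - gen 1 * gen 0 ^ 3) 0
  | rel2 : SerreRel
      (gen 1 ^ 3 * gen 0 - box3 • (gen 1 ^ 2 * gen 0 * gen 1)
        + box3 • (gen 1 * gen 0 * gen 1 ^ 2) - gen 0 * gen 1 ^ 3) 0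

/-- `U = U_q(𝔫)`, the free algebra on `E₁, E₂` modulo the quantized Serre relations. -/
abbrev U : Type := RingQuot SerreRel

def E1 : U := RingQuot.mkAlgHom F SerreRel (gen 0)
def E2 : U := RingQuot.mkAlgHom F SerreRel (gen 1)

/-- `A = (1/(q+q⁻¹))(E₂E₁ − q⁻²E₁E₂)`. -/
def Aelt : U := (qq + qq⁻¹)⁻¹ • (E2 * E1 - (qq⁻¹) ^ 2 • (E1 * E2))

def v0 : U := E1
def v1 : U := Aelt * v0 - v0 * Aelt
def v2 : U := Aelt * v1 - v1 * Aelt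
def v3 : U := Aelt * v2 - v2 * Aelt

/-- `uᵢ = (1 − q⁻²)⁻²ⁱ vᵢ`. -/
def u0 : U := v0
def u1 : U := ((1 - (qq⁻¹) ^ 2)⁻¹) ^ 2 • v1
def u2 : U := ((1 - (qq⁻¹) ^ 2)⁻¹) ^ 4 • v2
def u3 : U := ((1 - (qq⁻¹) ^ 2)⁻¹) ^ 6 • v3

/-- `p₁ = u₃u₁ − q²u₂²`. -/
def p1 : U := u3 * u1 - qq ^ 2 • u2 ^ 2
/-- `p₀ = u₂u₀ − q²u₁²`. -/
def p0 : U := u2 * u0 - qq ^ 2 • u1 ^ 2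

/-- `S`, the subalgebra of `U` generated by `u₀, u₁, u₂, u₃`. -/
abbrev Sgen : Subalgebra F U := Algebra.adjoin F ({u0, u1, u2, u3} : Set U)

def us0 : Sgen := ⟨u0, Algebra.subset_adjoin (by simp)⟩
def us1 : Sgen := ⟨u1, Algebra.subset_adjoin (by simp)⟩
def us2 : Sgen := ⟨u2, Algebra.subset_adjoin (by simp)⟩
def us3 : Sgen := ⟨u3, Algebra.subset_adjoin (by simp)⟩

/-- `p₁ = u₃u₁ − q²u₂²` as an element of `S`. -/
def ps1 : Sgen := us3 * us1 - qq ^ 2 • us2 ^ 2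
/-- `p₀ = u₂u₀ − q²u₁²` as an element of `S`. -/
def ps0 : Sgen := us2 * us0 - qq ^ 2 • us1 ^ 2

/-- Index quadruples `a = (a₃, a₂, a₁, a₀)`. -/
abbrev Idx : Type := ℕ × ℕ × ℕ × ℕ

/-- The PBW monomial `u₃^{a₃}u₂^{a₂}u₁^{a₁}u₀^{a₀}`. -/
def mon (a : Idx) : Sgen := us3 ^ a.1 * us2 ^ a.2.1 * us1 ^ a.2.2.1 * us0 ^ a.2.2.2

/-- `b(a) = C(a₃,2)+C(a₂,2)+C(a₁,2)+C(a₀,2)`. -/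
def bexp (a : Idx) : ℕ :=
  Nat.choose a.1 2 + Nat.choose a.2.1 2 + Nat.choose a.2.2.1 2 + Nat.choose a.2.2.2 2

/-- The dual PBW basis element `E[a] = q^{b(a)} u₃^{a₃}u₂^{a₂}u₁^{a₁}u₀^{a₀}`. -/
def Ee (a : Idx) : Sgen := qq ^ bexp a • mon a

/-- `N(a) = (a₃+a₂+a₁+a₀)² − 7a₃ − 5a₂ − 3a₁ − a₀`. -/
def Nnum (a : Idx) : ℤ :=
  ((a.1 : ℤ) + a.2.1 + a.2.2.1 + a.2.2.2) ^ 2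
    - 7 * a.1 - 5 * a.2.1 - 3 * a.2.2.1 - a.2.2.2

/-- `a ⊴ b` iff `b − a ∈ ℕ·(−1,2,−1,0) + ℕ·(0,−1,2,−1)`. -/
def tri (a b : Idx) : Prop :=
  ∃ s r : ℕ,
    (b.1 : ℤ) = a.1 - s ∧
    (b.2.1 : ℤ) = a.2.1 + 2 * s - r ∧
    (b.2.2.1 : ℤ) = a.2.2.1 - s + 2 * r ∧
    (b.2.2.2 : ℤ) = a.2.2.2 - r

/-- `S(a) = {b ∈ ℕ⁴ : a ⊴ b and a ≠ b}`. -/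
def Sset (a : Idx) : Set Idx := {b | tri a b ∧ a ≠ b}

/-- Condition (i): `B[a] − E[a] ∈ Σ_{b ∈ S(a)} qℤ[q]·E[b]`. -/
def cond1 (B : Idx → Sgen) (a : Idx) : Prop :=
  ∃ φ : Idx →₀ Polynomial ℤ,
    (↑φ.support : Set Idx) ⊆ Sset a ∧
    B a - Ee a =
      φ.sum fun b p => (qq * Polynomial.eval₂ (Int.castRingHom F) qq p) • Ee b

/-- Hypotheses on the bar involution of coefficients `bar : q ↦ q⁻¹` and on the
anti-automorphism `σ` of `S`: `σ` is an additive, anti-multiplicative bijection with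
`σ(c(q)·x) = c(q⁻¹)·σ(x)` and `σ(uᵢ) = q^{2i}uᵢ`. -/
def SigmaHyp (bar : F →+* F) (σ : Sgen → Sgen) : Prop :=
  bar qq = qq⁻¹ ∧
  Function.Bijective σ ∧
  (∀ x y : Sgen, σ (x + y) = σ x + σ y) ∧
  (∀ x y : Sgen, σ (x * y) = σ y * σ x) ∧
  (∀ (c : F) (x : Sgen), σ (c • x) = bar c • σ x) ∧
  σ us0 = us0 ∧ σ us1 = qq ^ 2 • us1 ∧ σ us2 = qq ^ 4 • us2 ∧ σ us3 = qq ^ 6 • us3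

/-- The defining properties of the dual canonical basis `B`: for every `a ∈ ℕ⁴`,
`B[a] − E[a] ∈ Σ_{b ∈ S(a)} qℤ[q]·E[b]` and `σ(B[a]) = q^{−N(a)}B[a]`. -/
def DCB (bar : F →+* F) (σ : Sgen → Sgen) (B : Idx → Sgen) : Prop :=
  ∀ a : Idx, cond1 B a ∧ σ (B a) = qq ^ (-Nnum a) • B a

/-- Extension of `B` to integer quadruples by the convention that `B[a] = 0` whenever
some coordinate of `a` is negative. -/
def Bz (B : Idx → Sgen) (a : ℤ × ℤ × ℤ × ℤ) : Sgen :=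
  if 0 ≤ a.1 ∧ 0 ≤ a.2.1 ∧ 0 ≤ a.2.2.1 ∧ 0 ≤ a.2.2.2 then
    B (a.1.toNat, a.2.1.toNat, a.2.2.1.toNat, a.2.2.2.toNat)
  else 0


set_option linter.unusedSimpArgs false

section gen
variable {K : Type*} [Field K] {R : Type*} [Ring R] [Algebra K R]

theorem g_R0 (q : K) (hq : q ≠ 0) (x y A v : R)
    (hA : A = y * x - (q⁻¹) ^ 2 • (x * y)) (hv : v = A * x - x * A)
    (h1 : x ^ 3 * y - (q ^ 2 + 1 + (q⁻¹) ^ 2) • (x ^ 2 * y * x)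
        + (q ^ 2 + 1 + (q⁻¹) ^ 2) • (x * y * x ^ 2) - y * x ^ 3 = 0) :
    v * x = q ^ 2 • (x * v) := by
  rw [← sub_eq_zero, ← neg_eq_zero, ← h1]
  subst hv hA
  simp only [mul_sub, sub_mul, mul_add, add_mul, smul_mul_assoc, mul_smul_comm, smul_smul, mul_assoc,
    smul_sub, smul_add, pow_succ, pow_zero, one_mul, mul_one]
  match_scalars <;> field_simp <;> ring

theorem g_R0' (q : K) (hq : q ≠ 0) (x y A w : R)
    (hA : A = y * x - (q⁻¹) ^ 2 • (x * y)) (hv : w = A * y - y * A)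
    (h1 : y ^ 3 * x - (q ^ 2 + 1 + (q⁻¹) ^ 2) • (y ^ 2 * x * y)
        + (q ^ 2 + 1 + (q⁻¹) ^ 2) • (y * x * y ^ 2) - x * y ^ 3 = 0) :
    y * w = q ^ 2 • (w * y) := by
  rw [← sub_eq_zero, ← neg_eq_zero, ← h1]
  subst hv hA
  simp only [mul_sub, sub_mul, mul_add, add_mul, smul_mul_assoc, mul_smul_comm, smul_smul, mul_assoc,
    smul_sub, smul_add, pow_succ, pow_zero, one_mul, mul_one]
  match_scalars <;> field_simp <;> ring

theorem g_Dx (q : K) (hq : q ≠ 0) (x y A v D : R)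
    (hA : A = y * x - (q⁻¹) ^ 2 • (x * y))
    (h0 : v * x = q ^ 2 • (x * v)) (hD : D = y * v - (q⁻¹) ^ 2 • (v * y)) :
    D * x - x * D = q ^ 2 • (A * v) - (q⁻¹) ^ 2 • (v * A) := by
  have e1 : y * (v * x) = y * (q ^ 2 • (x * v)) := by rw [h0]
  have e2 : (v * x) * y = (q ^ 2 • (x * v)) * y := by rw [h0]
  subst hD hA
  simp only [mul_sub, sub_mul, mul_add, add_mul, smul_mul_assoc, mul_smul_comm, smul_smul, mul_assoc,
    smul_sub, smul_add] at e1 e2 ⊢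
  linear_combination (norm := skip) (1:K) • e1 - (q⁻¹)^4 • e2
  match_scalars <;> field_simp <;> ring

theorem g_Dy (q : K) (hq : q ≠ 0) (x y A w D : R)
    (hA : A = y * x - (q⁻¹) ^ 2 • (x * y))
    (h0 : y * w = q ^ 2 • (w * y)) (hD : D = -(w * x - (q⁻¹) ^ 2 • (x * w))) :
    D * y - y * D = q ^ 2 • (w * A) - (q⁻¹) ^ 2 • (A * w) := by
  have e1 : (y * w) * x = (q ^ 2 • (w * y)) * x := by rw [h0]
  have e2 : x * (y * w) = x * (q ^ 2 • (w * y)) := by rw [h0]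
  subst hD hA
  simp only [mul_sub, sub_mul, mul_add, add_mul, smul_mul_assoc, mul_smul_comm, smul_smul, mul_assoc,
    smul_sub, smul_add, neg_sub] at e1 e2 ⊢
  linear_combination (norm := skip) (1:K) • e1 - (q⁻¹)^4 • e2
  match_scalars <;> field_simp <;> ring

theorem g_DA (q : K) (hq : q ≠ 0) (h3 : q ^ 2 + 1 + (q⁻¹) ^ 2 ≠ 0) (x y A v w D : R)
    (hA : A = y * x - (q⁻¹) ^ 2 • (x * y)) (hv : v = A * x - x * A) (hw : w = A * y - y * A)
    (hD : D = y * v - (q⁻¹) ^ 2 • (v * y)) (hD' : D = -(w * x - (q⁻¹) ^ 2 • (x * w)))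
    (hx : D * x - x * D = q ^ 2 • (A * v) - (q⁻¹) ^ 2 • (v * A))
    (hy : D * y - y * D = q ^ 2 • (w * A) - (q⁻¹) ^ 2 • (A * w)) :
    D * A = A * D := by
  have key : (q ^ 2 + 1 + (q⁻¹) ^ 2) • (D * A - A * D) = 0 := by
    have f1 : (D * y - y * D) * x = (q ^ 2 • (w * A) - (q⁻¹) ^ 2 • (A * w)) * x := by rw [hy]
    have f2 : y * (D * x - x * D) = y * (q ^ 2 • (A * v) - (q⁻¹) ^ 2 • (v * A)) := by rw [hx]
    have f3 : (D * x - x * D) * y = (q ^ 2 • (A * v) - (q⁻¹) ^ 2 • (v * A)) * y := by rw [hx]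
    have f4 : x * (D * y - y * D) = x * (q ^ 2 • (w * A) - (q⁻¹) ^ 2 • (A * w)) := by rw [hy]
    have a1 : D * A = D * (y * x - (q⁻¹) ^ 2 • (x * y)) := by rw [hA]
    have a2 : A * D = (y * x - (q⁻¹) ^ 2 • (x * y)) * D := by rw [hA]
    have d1 : D * A = (y * v - (q⁻¹) ^ 2 • (v * y)) * A := by rw [hD]
    have d2 : A * D = A * (y * v - (q⁻¹) ^ 2 • (v * y)) := by rw [hD]
    have d3 : D * A = -(w * x - (q⁻¹) ^ 2 • (x * w)) * A := by rw [hD']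
    have d4 : A * D = A * -(w * x - (q⁻¹) ^ 2 • (x * w)) := by rw [hD']
    have g1 : w * v = w * (A * x - x * A) := by rw [hv]
    have g2 : v * w = v * (A * y - y * A) := by rw [hw]
    have g3 : w * v = (A * y - y * A) * v := by rw [hw]
    have g4 : v * w = (A * x - x * A) * w := by rw [hv]
    clear hA hv hw hD hD' hx hy
    simp only [mul_sub, sub_mul, mul_add, add_mul, smul_mul_assoc, mul_smul_comm, smul_smul,
      mul_assoc, smul_sub, smul_add, neg_sub] at *
    linear_combination (norm := skip) (1:K) • a1 - (1:K) • a2 + (1:K) • f1 + (1:K) • f2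
      - (q⁻¹)^2 • f3 - (q⁻¹)^2 • f4 + (q⁻¹)^2 • d1 - q ^ 2 • d2 + q ^ 2 • d3 - (q⁻¹)^2 • d4
      - q^2 • g1 - (q⁻¹)^4 • g2 + q ^ 2 • g3 + (q⁻¹)^4 • g4
    match_scalars <;> field_simp <;> ring
  rcases smul_eq_zero.1 key with h | h
  · exact absurd h h3
  · exact sub_eq_zero.1 h

theorem g_der (A x y : R) :
    A * (x * y) - (x * y) * A = (A * x - x * A) * y + x * (A * y - y * A) := by
  noncomm_ring

theorem g_derrel (c : K) (A x y x' y' z : R) (h : x * y = c • (x' * y') + z) :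
    (A * x - x * A) * y + x * (A * y - y * A) =
      c • ((A * x' - x' * A) * y' + x' * (A * y' - y' * A)) + (A * z - z * A) := by
  rw [← g_der, ← g_der, h]
  simp only [mul_add, add_mul, smul_mul_assoc, mul_smul_comm, smul_sub]
  abel

theorem g_D1 (al be : K) (A D w0 w1 w2 : R)
    (h1 : w1 = A * w0 - w0 * A) (h2 : w2 = A * w1 - w1 * A)
    (hDA : D * A = A * D) (hD : D * w0 - w0 * D = al • (A * w1) - be • (w1 * A)) :
    D * w1 - w1 * D = al • (A * w2) - be • (w2 * A) := by
  have e : D * w1 - w1 * D = A * (D * w0 - w0 * D) - (D * w0 - w0 * D) * A := by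
    rw [h1]
    have e1 : D * A * w0 = A * D * w0 := by rw [hDA]
    have e2 : w0 * (D * A) = w0 * (A * D) := by rw [hDA]
    simp only [mul_sub, sub_mul, mul_assoc] at e1 e2 ⊢
    rw [e1, e2]
    abel
  rw [e, hD, h2]
  simp only [mul_sub, sub_mul, smul_mul_assoc, mul_smul_comm, mul_assoc, smul_sub]
  module

theorem g_step (q : K) (al be : K) (hab : al + be ≠ 0) (A D w0 w1 w2 w3 : R)
    (h1 : w1 = A * w0 - w0 * A) (h2 : w2 = A * w1 - w1 * A) (h3 : w3 = A * w2 - w2 * A)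
    (hD0 : D * w0 - w0 * D = al • (A * w1) - be • (w1 * A))
    (hD1 : D * w1 - w1 * D = al • (A * w2) - be • (w2 * A))
    (h0 : w1 * w0 = q ^ 2 • (w0 * w1)) :
    w2 * w1 = q ^ 2 • (w1 * w2) := by
  have r1 : w2 * w0 + w1 * w1 = q ^ 2 • (w1 * w1 + w0 * w2) := by
    have := g_derrel (q ^ 2) A w1 w0 w0 w1 0 (by rw [h0, add_zero])
    simpa [← h1, ← h2] using this
  have r2 : w3 * w0 + w2 * w1 + (w2 * w1 + w1 * w2)
      = q ^ 2 • (w2 * w1 + w1 * w2 + (w1 * w2 + w0 * w3)) := by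
    have e : A * (w2 * w0 + w1 * w1) - (w2 * w0 + w1 * w1) * A
      = A * (q ^ 2 • (w1 * w1 + w0 * w2)) - (q ^ 2 • (w1 * w1 + w0 * w2)) * A := by rw [r1]
    have p1 := g_der A w2 w0
    have p2 := g_der A w1 w1
    have p3 := g_der A w0 w2
    rw [← h1, ← h3] at p1 p3
    rw [← h2] at p2
    simp only [mul_add, add_mul, smul_mul_assoc, mul_smul_comm] at e
    linear_combination (norm := module) (1:K) • e - (1:K) • p1 + (q ^ 2 - 1) • p2 + q ^ 2 • p3
  have rD := g_derrel (q ^ 2) D w1 w0 w0 w1 0 (by rw [h0, add_zero])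
  rw [hD0, hD1] at rD
  have m0 : w2 * A = A * w2 - w3 := by rw [h3]; abel
  have m1 : w1 * A = A * w1 - w2 := by rw [h2]; abel
  have m2 : w0 * A = A * w0 - w1 := by rw [h1]; abel
  have m1' : ∀ z, w1 * (A * z) = A * (w1 * z) - w2 * z := by
    intro z; rw [← mul_assoc, m1, sub_mul, mul_assoc]
  have m2' : ∀ z, w0 * (A * z) = A * (w0 * z) - w1 * z := by
    intro z; rw [← mul_assoc, m2, sub_mul, mul_assoc]
  have r1A : A * (w2 * w0 + w1 * w1) = A * (q ^ 2 • (w1 * w1 + w0 * w2)) := by rw [r1]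
  have key : (al + be) • (w2 * w1 - q ^ 2 • (w1 * w2)) = 0 := by
    clear r1 h1 h2 h3 hD0 hD1 h0
    rw [m0, m1] at rD
    simp only [mul_sub, sub_mul, mul_add, smul_mul_assoc, mul_smul_comm, mul_assoc,
      smul_sub, smul_add, m1', m2', mul_zero, zero_mul, sub_zero, add_zero] at rD r1A r2 ⊢
    linear_combination (norm := module) (-1:K) • rD + (al - be) • r1A + be • r2
  rcases smul_eq_zero.1 key with h | h
  · exact absurd h hab
  · exact sub_eq_zero.1 h


theorem g_vrels (q : K) (hq : q ≠ 0) (h3 : q ^ 2 + 1 + (q⁻¹) ^ 2 ≠ 0) (ht : q + q⁻¹ ≠ 0)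
    (h4 : q ^ 2 + (q⁻¹) ^ 2 ≠ 0) (x y A v0 v1 v2 v3 : R)
    (s1 : x ^ 3 * y - (q ^ 2 + 1 + (q⁻¹) ^ 2) • (x ^ 2 * y * x)
        + (q ^ 2 + 1 + (q⁻¹) ^ 2) • (x * y * x ^ 2) - y * x ^ 3 = 0)
    (s2 : y ^ 3 * x - (q ^ 2 + 1 + (q⁻¹) ^ 2) • (y ^ 2 * x * y)
        + (q ^ 2 + 1 + (q⁻¹) ^ 2) • (y * x * y ^ 2) - x * y ^ 3 = 0)
    (hA : A = (q + q⁻¹)⁻¹ • (y * x - (q⁻¹) ^ 2 • (x * y)))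
    (hv0 : v0 = x) (hv1 : v1 = A * v0 - v0 * A) (hv2 : v2 = A * v1 - v1 * A)
    (hv3 : v3 = A * v2 - v2 * A) :
    v1 * v0 = q ^ 2 • (v0 * v1) ∧ v2 * v1 = q ^ 2 • (v1 * v2) ∧
    v3 * v2 = q ^ 2 • (v2 * v3) := by
  obtain ⟨A0, hA0⟩ : ∃ A0, A0 = y * x - (q⁻¹) ^ 2 • (x * y) := ⟨_, rfl⟩
  obtain ⟨v, hv⟩ : ∃ v, v = A0 * x - x * A0 := ⟨_, rfl⟩
  obtain ⟨w, hw⟩ : ∃ w, w = A0 * y - y * A0 := ⟨_, rfl⟩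
  obtain ⟨D, hD⟩ : ∃ D, D = y * v - (q⁻¹) ^ 2 • (v * y) := ⟨_, rfl⟩
  have hD' : D = -(w * x - (q⁻¹) ^ 2 • (x * w)) := by
    have e : A0 * A0 - A0 * A0 = 0 := sub_self _
    have e2 : A0 * (y * x - (q⁻¹) ^ 2 • (x * y)) - (y * x - (q⁻¹) ^ 2 • (x * y)) * A0
      = 0 := by rw [← hA0, e]
    rw [← sub_eq_zero, ← e2, hD, hw, hv]
    simp only [mul_sub, sub_mul, smul_mul_assoc, mul_smul_comm, mul_assoc, smul_sub]
    module
  have r0 := g_R0 q hq x y A0 v hA0 hv s1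
  have r0' := g_R0' q hq x y A0 w hA0 hw s2
  have hx := g_Dx q hq x y A0 v D hA0 r0 hD
  have hy := g_Dy q hq x y A0 w D hA0 r0' hD'
  have hDA := g_DA q hq h3 x y A0 v w D hA0 hv hw hD hD' hx hy
  have sA : A0 = (q + q⁻¹) • A := by
    rw [hA, ← hA0, smul_smul, mul_inv_cancel₀ ht, one_smul]
  have sv : v = (q + q⁻¹) • v1 := by
    rw [hv, sA, hv1, hv0]
    simp only [smul_mul_assoc, mul_smul_comm, smul_sub]
  have hDA2 : D * A = A * D := by
    rw [sA] at hDA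
    simp only [smul_mul_assoc, mul_smul_comm] at hDA
    exact smul_right_injective _ ht hDA
  have r1 : v1 * v0 = q ^ 2 • (v0 * v1) := by
    rw [sv] at r0
    simp only [smul_mul_assoc, mul_smul_comm] at r0
    rw [smul_comm] at r0
    rw [hv0]
    exact smul_right_injective _ ht r0
  have hx2 : D * v0 - v0 * D = (q ^ 2 * (q + q⁻¹) ^ 2) • (A * v1)
      - ((q⁻¹) ^ 2 * (q + q⁻¹) ^ 2) • (v1 * A) := by
    rw [hv0, hx, sA, sv]
    simp only [smul_mul_assoc, mul_smul_comm]
    module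
  have hab : q ^ 2 * (q + q⁻¹) ^ 2 + (q⁻¹) ^ 2 * (q + q⁻¹) ^ 2 ≠ 0 := by
    rw [← add_mul]
    exact mul_ne_zero h4 (pow_ne_zero _ ht)
  have hx3 := g_D1 _ _ A D v0 v1 v2 hv1 hv2 hDA2 hx2
  have hx4 := g_D1 _ _ A D v1 v2 v3 hv2 hv3 hDA2 hx3
  have r2 := g_step q _ _ hab A D v0 v1 v2 v3 hv1 hv2 hv3 hx2 hx3 r1
  have r3 := g_step q _ _ hab A D v1 v2 v3 _ hv2 hv3 rfl hx3 hx4 r2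
  exact ⟨r1, r2, r3⟩

theorem inv_form (q : K) (hq : q ≠ 0) {x y : R} (h : x = q ^ 2 • y) :
    y = (q⁻¹) ^ 2 • x := by
  rw [h, smul_smul, ← mul_pow, inv_mul_cancel₀ hq, one_pow, one_smul]

theorem g_der2 (q : K) (hq : q ≠ 0) (A a b c : R) (hb : b = A * a - a * A) (hc : c = A * b - b * A)
    (h : b * a = q ^ 2 • (a * b)) :
    a * c = (q⁻¹) ^ 2 • (c * a) + ((q⁻¹) ^ 2 - 1) • b ^ 2 := by
  have := g_derrel (q ^ 2) A b a a b 0 (by rw [h, add_zero])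
  rw [← hb, ← hc, mul_zero, zero_mul, sub_zero, add_zero] at this
  linear_combination (norm := skip) - (q⁻¹) ^ 2 • this
  rw [pow_two b]
  match_scalars <;> field_simp <;> ring

theorem g_der3 (q : K) (hq : q ≠ 0) (A v0 v1 v2 v3 : R)
    (hv1 : v1 = A * v0 - v0 * A) (hv2 : v2 = A * v1 - v1 * A)
    (hv3 : v3 = A * v2 - v2 * A) (r1 : v1 * v0 = q ^ 2 • (v0 * v1))
    (r2 : v2 * v1 = q ^ 2 • (v1 * v2)) :
    v0 * v3 = (q⁻¹) ^ 2 • (v3 * v0) + ((q⁻¹) ^ 4 - 1) • (v2 * v1) := by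
  have h02 := g_der2 q hq A v0 v1 v2 hv1 hv2 r1
  have h12 := inv_form q hq r2
  have := g_derrel _ A _ _ _ _ _ h02
  rw [← hv1, ← hv3] at this
  have e : A * (((q⁻¹) ^ 2 - 1) • v1 ^ 2) - (((q⁻¹) ^ 2 - 1) • v1 ^ 2) * A
      = ((q⁻¹) ^ 2 - 1) • (v2 * v1 + v1 * v2) := by
    have := g_der A v1 v1
    rw [← hv2] at this
    rw [← this, mul_smul_comm, smul_mul_assoc, pow_two v1, smul_sub]
  rw [e] at this
  rw [h12] at this
  linear_combination (norm := skip) (1:K) • this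
  match_scalars <;> field_simp <;> ring

/-- The straightening relations. -/
structure Rels (q : K) (u0 u1 u2 u3 : R) : Prop where
  c01 : u0 * u1 = (q⁻¹) ^ 2 • (u1 * u0)
  c12 : u1 * u2 = (q⁻¹) ^ 2 • (u2 * u1)
  c23 : u2 * u3 = (q⁻¹) ^ 2 • (u3 * u2)
  c02 : u0 * u2 = (q⁻¹) ^ 2 • (u2 * u0) + ((q⁻¹) ^ 2 - 1) • (u1 * u1)
  c13 : u1 * u3 = (q⁻¹) ^ 2 • (u3 * u1) + ((q⁻¹) ^ 2 - 1) • (u2 * u2)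
  c03 : u0 * u3 = (q⁻¹) ^ 2 • (u3 * u0) + ((q⁻¹) ^ 4 - 1) • (u2 * u1)

theorem g_rels (q : K) (hq : q ≠ 0) (h3 : q ^ 2 + 1 + (q⁻¹) ^ 2 ≠ 0) (ht : q + q⁻¹ ≠ 0)
    (h4 : q ^ 2 + (q⁻¹) ^ 2 ≠ 0) (c : K) (x y A v0 v1 v2 v3 : R)
    (s1 : x ^ 3 * y - (q ^ 2 + 1 + (q⁻¹) ^ 2) • (x ^ 2 * y * x)
        + (q ^ 2 + 1 + (q⁻¹) ^ 2) • (x * y * x ^ 2) - y * x ^ 3 = 0)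
    (s2 : y ^ 3 * x - (q ^ 2 + 1 + (q⁻¹) ^ 2) • (y ^ 2 * x * y)
        + (q ^ 2 + 1 + (q⁻¹) ^ 2) • (y * x * y ^ 2) - x * y ^ 3 = 0)
    (hA : A = (q + q⁻¹)⁻¹ • (y * x - (q⁻¹) ^ 2 • (x * y)))
    (hv0 : v0 = x) (hv1 : v1 = A * v0 - v0 * A) (hv2 : v2 = A * v1 - v1 * A)
    (hv3 : v3 = A * v2 - v2 * A) :
    Rels q v0 (c ^ 2 • v1) (c ^ 4 • v2) (c ^ 6 • v3) := by
  obtain ⟨r1, r2, r3⟩ := g_vrels q hq h3 ht h4 x y A v0 v1 v2 v3 s1 s2 hA hv0 hv1 hv2 hv3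
  have k1 := inv_form q hq r1
  have k2 := inv_form q hq r2
  have k3 := inv_form q hq r3
  have k4 := g_der2 q hq A v0 v1 v2 hv1 hv2 r1
  have k5 := g_der2 q hq A v1 v2 v3 hv2 hv3 r2
  have k6 := g_der3 q hq A v0 v1 v2 v3 hv1 hv2 hv3 r1 r2
  constructor <;> simp only [smul_mul_assoc, mul_smul_comm]
  · rw [k1]; module
  · rw [k2]; module
  · rw [k3]; module
  · rw [k4, pow_two v1]; module
  · rw [k5, pow_two v2]; module
  · rw [k6]; module

end gen
theorem qq_ne : qq ≠ 0 := RatFunc.X_ne_zero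

theorem ev_eq (p : Polynomial ℤ) : Polynomial.eval₂ (Int.castRingHom F) qq p
    = algebraMap (Polynomial ℚ) F (p.map (Int.castRingHom ℚ)) := by
  induction p using Polynomial.induction_on' with
  | add p r hp hr => simp [Polynomial.eval₂_add, hp, hr]
  | monomial n a =>
    rw [Polynomial.eval₂_monomial, Polynomial.map_monomial, ← Polynomial.C_mul_X_pow_eq_monomial]
    simp [qq]

theorem ev_inj (p : Polynomial ℤ) (h : Polynomial.eval₂ (Int.castRingHom F) qq p = 0) : p = 0 := by
  rw [ev_eq] at h
  have h2 := (map_eq_zero_iff _ (RatFunc.algebraMap_injective ℚ)).1 h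
  exact (Polynomial.map_eq_zero_iff (Int.cast_injective)).1 h2

theorem ne_aux (n : ℕ) (hn : 0 < n) : qq ^ n + 1 ≠ 0 := by
  intro h
  have := ev_inj (Polynomial.X ^ n + 1) (by simpa [Polynomial.eval₂_add, Polynomial.eval₂_pow] using h)
  have h2 := congrArg (fun p => Polynomial.coeff p 0) this
  simp [hn.ne] at h2

theorem t_ne : qq + qq⁻¹ ≠ 0 := by
  have h := ne_aux 2 (by norm_num)
  have hq := qq_ne
  intro h2
  apply h
  field_simp at h2
  linear_combination h2

theorem t4_ne : qq ^ 2 + (qq⁻¹) ^ 2 ≠ 0 := by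
  have h := ne_aux 4 (by norm_num)
  have hq := qq_ne
  intro h2
  apply h
  field_simp at h2
  linear_combination h2

theorem box3_ne : qq ^ 2 + 1 + (qq⁻¹) ^ 2 ≠ 0 := by
  have hq := qq_ne
  intro h2
  field_simp at h2
  have := ev_inj (Polynomial.X ^ 4 + Polynomial.X ^ 2 + 1) (by
    simp [Polynomial.eval₂_add, Polynomial.eval₂_pow]; linear_combination h2)
  have h2 := congrArg (fun p => Polynomial.coeff p 0) this
  simp at h2

theorem serre1 : E1 ^ 3 * E2 - (qq ^ 2 + 1 + (qq⁻¹) ^ 2) • (E1 ^ 2 * E2 * E1)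
        + (qq ^ 2 + 1 + (qq⁻¹) ^ 2) • (E1 * E2 * E1 ^ 2) - E2 * E1 ^ 3 = 0 := by
  have := RingQuot.mkAlgHom_rel F SerreRel.rel1
  simp only [map_sub, map_add, map_mul, map_pow, map_smul, map_zero] at this
  exact this

theorem serre2 : E2 ^ 3 * E1 - (qq ^ 2 + 1 + (qq⁻¹) ^ 2) • (E2 ^ 2 * E1 * E2)
        + (qq ^ 2 + 1 + (qq⁻¹) ^ 2) • (E2 * E1 * E2 ^ 2) - E1 * E2 ^ 3 = 0 := by
  have := RingQuot.mkAlgHom_rel F SerreRel.rel2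
  simp only [map_sub, map_add, map_mul, map_pow, map_smul, map_zero] at this
  exact this

theorem rels_U : Rels qq u0 u1 u2 u3 :=
  g_rels qq qq_ne box3_ne t_ne t4_ne _ E1 E2 Aelt v0 v1 v2 v3 serre1 serre2 rfl rfl rfl rfl rfl

theorem rels_S : Rels qq us0 us1 us2 us3 := by
  have h := rels_U
  exact ⟨Subtype.ext h.c01, Subtype.ext h.c12, Subtype.ext h.c23, Subtype.ext h.c02,
    Subtype.ext h.c13, Subtype.ext h.c03⟩


section strt
variable {K : Type*} [Field K] {R : Type*} [Ring R] [Algebra K R]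

def hgt (a : Idx) : ℕ := 3 * a.1 + a.2.1

theorem tri_refl (a : Idx) : tri a a := ⟨0, 0, by simp⟩

theorem tri_trans {a b c : Idx} (h1 : tri a b) (h2 : tri b c) : tri a c := by
  obtain ⟨s, r, h⟩ := h1
  obtain ⟨s', r', h'⟩ := h2
  exact ⟨s + s', r + r', by push_cast; omega⟩

theorem tri_hgt {a b : Idx} (h : tri a b) : hgt b ≤ hgt a := by
  obtain ⟨s, r, h⟩ := h
  unfold hgt; omega

theorem Sset_hgt {a b : Idx} (h : b ∈ Sset a) : hgt b < hgt a := by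
  obtain ⟨⟨s, r, h⟩, hne⟩ := h
  have : ¬ (s = 0 ∧ r = 0) := by
    rintro ⟨rfl, rfl⟩
    apply hne
    obtain ⟨a3, a2, a1, a0⟩ := a
    obtain ⟨b3, b2, b1, b0⟩ := b
    simp only [Prod.mk.injEq] at h ⊢
    omega
  unfold hgt; omega

theorem Sset_of_hgt {a b : Idx} (h : tri a b) (h2 : hgt b < hgt a) : b ∈ Sset a :=
  ⟨h, by rintro rfl; exact lt_irrefl _ h2⟩

theorem Sset_tri {a b c : Idx} (h1 : b ∈ Sset a) (h2 : tri b c) : c ∈ Sset a :=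
  Sset_of_hgt (tri_trans h1.1 h2) (lt_of_le_of_lt (tri_hgt h2) (Sset_hgt h1))

theorem tri_Sset {a b c : Idx} (h1 : tri a b) (h2 : c ∈ Sset b) : c ∈ Sset a :=
  Sset_of_hgt (tri_trans h1 h2.1) (lt_of_lt_of_le (Sset_hgt h2) (tri_hgt h1))

theorem tri_add {a b : Idx} (e : Idx) (h : tri a b) : tri (a + e) (b + e) := by
  obtain ⟨s, r, h⟩ := h
  refine ⟨s, r, ?_⟩
  simp only [Prod.fst_add, Prod.snd_add]
  push_cast; omega

theorem Sset_add {a b : Idx} (e : Idx) (h : b ∈ Sset a) : b + e ∈ Sset (a + e) :=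
  ⟨tri_add e h.1, fun h' => h.2 (add_right_cancel h')⟩

theorem tri_Nnum {a b : Idx} (h : tri a b) : Nnum b = Nnum a := by
  obtain ⟨s, r, h1, h2, h3, h4⟩ := h
  unfold Nnum
  rw [h1, h2, h3, h4]; ring

def gmon (u0 u1 u2 u3 : R) (a : Idx) : R := u3 ^ a.1 * u2 ^ a.2.1 * u1 ^ a.2.2.1 * u0 ^ a.2.2.2

/-- The additive group generated by `c • m b`, `c ∈ L`, `b ∈ T`. -/
def WW (L : Subring K) (m : Idx → R) (T : Set Idx) : AddSubgroup R :=
  AddSubgroup.closure {x | ∃ c ∈ L, ∃ b ∈ T, x = c • m b}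

theorem WW_mem {L : Subring K} {m : Idx → R} {T : Set Idx} {b : Idx} (h : b ∈ T) :
    m b ∈ WW L m T :=
  AddSubgroup.subset_closure ⟨1, L.one_mem, b, h, by simp⟩

theorem WW_mono {L : Subring K} {m : Idx → R} {T T' : Set Idx} (h : T ⊆ T') {x : R}
    (hx : x ∈ WW L m T) : x ∈ WW L m T' := by
  refine AddSubgroup.closure_mono ?_ hx
  rintro x ⟨c, hc, b, hb, rfl⟩
  exact ⟨c, hc, b, h hb, rfl⟩

theorem WW_smul {L : Subring K} {m : Idx → R} {T : Set Idx} {c : K} (hc : c ∈ L) {x : R}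
    (hx : x ∈ WW L m T) : c • x ∈ WW L m T := by
  induction hx using AddSubgroup.closure_induction with
  | mem x hx =>
    obtain ⟨d, hd, b, hb, rfl⟩ := hx
    exact AddSubgroup.subset_closure ⟨c * d, L.mul_mem hc hd, b, hb, by rw [smul_smul]⟩
  | zero => rw [smul_zero]; exact zero_mem _
  | add x y _ _ hx hy => rw [smul_add]; exact add_mem hx hy
  | neg x _ hx => rw [smul_neg]; exact neg_mem hx

theorem WW_mul {L : Subring K} {m : Idx → R} {T T' : Set Idx} (u : R)
    (h : ∀ b ∈ T, u * m b ∈ WW L m T') {x : R}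
    (hx : x ∈ WW L m T) : u * x ∈ WW L m T' := by
  induction hx using AddSubgroup.closure_induction with
  | mem x hx =>
    obtain ⟨d, hd, b, hb, rfl⟩ := hx
    rw [mul_smul_comm]; exact WW_smul hd (h b hb)
  | zero => rw [mul_zero]; exact zero_mem _
  | add x y _ _ hx hy => rw [mul_add]; exact add_mem hx hy
  | neg x _ hx => rw [mul_neg]; exact neg_mem hx

structure Ctx (q : K) (u0 u1 u2 u3 : R) (L : Subring K) : Prop where
  hq : q ≠ 0
  rel : Rels q u0 u1 u2 u3
  qL : q ∈ L
  qiL : q⁻¹ ∈ L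

theorem zpow_L {q : K} {L : Subring K} (hq : q ∈ L) (hqi : q⁻¹ ∈ L) (n : ℤ) : q ^ n ∈ L := by
  cases n with
  | ofNat n => simpa using pow_mem hq n
  | negSucc n => rw [zpow_negSucc, ← inv_pow]; exact pow_mem hqi _

/-- Left multiplication by `u` acts like adding `e`, with leading exponent `k`. -/
def PP (q : K) (L : Subring K) (m : Idx → R) (u : R) (e : Idx) (b : Idx) (k : ℤ) : Prop :=
  u * m b - q ^ k • m (b + e) ∈ WW L m (Sset (b + e))

theorem PP_weak {q : K} {L : Subring K} (hq : q ∈ L) (hqi : q⁻¹ ∈ L) {m : Idx → R} {u : R}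
    {e b : Idx} {k : ℤ} (h : PP q L m u e b k) : u * m b ∈ WW L m {c | tri (b + e) c} := by
  have h1 : u * m b = (u * m b - q ^ k • m (b + e)) + q ^ k • m (b + e) := by abel
  rw [h1]
  refine add_mem (WW_mono (fun c hc => hc.1) h) (WW_smul (zpow_L hq hqi k) (WW_mem ?_))
  exact tri_refl _

theorem QQ_tri {q : K} {L : Subring K} (hq : q ∈ L) (hqi : q⁻¹ ∈ L) {m : Idx → R} {u : R}
    {e : Idx} (h : ∀ b, ∃ k, PP q L m u e b k) {a : Idx} {x : R}
    (hx : x ∈ WW L m {c | tri a c}) : u * x ∈ WW L m {c | tri (a + e) c} := by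
  refine WW_mul u (fun b hb => ?_) hx
  obtain ⟨k, hk⟩ := h b
  exact WW_mono (fun c hc => tri_trans (tri_add e hb) hc) (PP_weak hq hqi hk)

theorem QQ_S {q : K} {L : Subring K} (hq : q ∈ L) (hqi : q⁻¹ ∈ L) {m : Idx → R} {u : R}
    {e : Idx} (h : ∀ b, ∃ k, PP q L m u e b k) {a : Idx} {x : R}
    (hx : x ∈ WW L m (Sset a)) : u * x ∈ WW L m (Sset (a + e)) := by
  refine WW_mul u (fun b hb => ?_) hx
  obtain ⟨k, hk⟩ := h b
  exact WW_mono (fun c hc => Sset_tri (Sset_add e hb) hc) (PP_weak hq hqi hk)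

/-- inductive step for straightening -/
theorem PP_step {q : K} (hq0 : q ≠ 0) {L : Subring K} (hq : q ∈ L) (hqi : q⁻¹ ∈ L) {m : Idx → R}
    {u v y z : R} {c : K} (hc : c ∈ L)
    (hr : u * v = (q⁻¹) ^ 2 • (v * u) + c • (y * z)) {eu ev ey ez b : Idx} {k : ℤ}
    (hv1 : v * m b = m (b + ev)) (hv2 : v * m (b + eu) = m (b + eu + ev))
    (hv : ∀ b, ∃ k, PP q L m v ev b k)
    (hy : ∀ b, ∃ k, PP q L m y ey b k) (hz : ∀ b, ∃ k, PP q L m z ez b k)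
    (hs : b + ez + ey ∈ Sset (b + eu + ev))
    (h : PP q L m u eu b k) : PP q L m u eu (b + ev) (k - 2) := by
  unfold PP at h ⊢
  have hcm : b + ev + eu = b + eu + ev := by abel
  rw [hcm]
  have hk : q ^ (k - 2) = (q⁻¹) ^ 2 * q ^ k := by
    rw [zpow_sub₀ hq0, inv_pow, div_eq_mul_inv, mul_comm]; norm_cast
  have e : u * m (b + ev) - q ^ (k - 2) • m (b + eu + ev) =
      (q⁻¹) ^ 2 • (v * (u * m b - q ^ k • m (b + eu))) + c • (y * (z * m b)) := by
    rw [← hv1, ← mul_assoc, hr, hk, ← hv2]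
    simp only [mul_sub, add_mul, smul_mul_assoc, mul_smul_comm, smul_sub, mul_assoc]
    module
  rw [e]
  refine add_mem (WW_smul (pow_mem hqi 2) (QQ_S hq hqi hv h)) (WW_smul hc ?_)
  obtain ⟨k', hk'⟩ := hz b
  exact WW_mono (fun d hd => Sset_tri hs hd) (QQ_tri hq hqi hy (PP_weak hq hqi hk'))

theorem PP_exact {q : K} {L : Subring K} {m : Idx → R} {u : R} {e b : Idx} {k : ℤ}
    (h : u * m b = q ^ k • m (b + e)) : PP q L m u e b k := by
  unfold PP; rw [h, sub_self]; exact zero_mem _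

theorem PP_congr {q : K} {L : Subring K} {m : Idx → R} {u : R} {e b b' : Idx} {k k' : ℤ}
    (hb : b = b') (hk : k = k') (h : PP q L m u e b k) : PP q L m u e b' k' := by
  subst hb hk; exact h

theorem sig_congr {q : K} {L : Subring K} {m : Idx → R} {σ : R → R} {b b' : Idx} {k k' : ℤ}
    (hb : b = b') (hk : k = k') (h : σ (m b) - q ^ k • m b ∈ WW L m (Sset b)) :
    σ (m b') - q ^ k' • m b' ∈ WW L m (Sset b') := by
  subst hb hk; exact h

theorem qcomm_pow {q : K} (hq0 : q ≠ 0) {u v : R} (h : u * v = (q⁻¹) ^ 2 • (v * u)) (n : ℕ) :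
    u * v ^ n = q ^ (-2 * n : ℤ) • (v ^ n * u) := by
  induction n with
  | zero => simp
  | succ n ih =>
    have hk : q ^ (-2 * ((n + 1 : ℕ) : ℤ)) = (q⁻¹) ^ 2 * q ^ (-2 * n : ℤ) := by
      have : (-2 * ((n + 1 : ℕ) : ℤ)) = -2 + -2 * n := by push_cast; ring
      rw [this, zpow_add₀ hq0, inv_pow, zpow_neg]; norm_cast
    rw [pow_succ, ← mul_assoc, ih, smul_mul_assoc, mul_assoc, h, mul_smul_comm, hk, smul_smul,
      mul_comm, mul_assoc]

abbrev e3 : Idx := (1, 0, 0, 0)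
abbrev e2 : Idx := (0, 1, 0, 0)
abbrev e1 : Idx := (0, 0, 1, 0)
abbrev e0 : Idx := (0, 0, 0, 1)

variable {q : K} {u0 u1 u2 u3 : R} {L : Subring K}

theorem gm3 (b : Idx) : u3 * gmon u0 u1 u2 u3 b = gmon u0 u1 u2 u3 (b + e3) := by
  obtain ⟨b3, b2, b1, b0⟩ := b
  simp [gmon, pow_succ', mul_assoc]

theorem gm2 (b2 b1 b0 : ℕ) : u2 * gmon u0 u1 u2 u3 (0, b2, b1, b0)
    = gmon u0 u1 u2 u3 ((0, b2, b1, b0) + e2) := by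
  simp [gmon, pow_succ', mul_assoc]

theorem PP3 (b : Idx) : PP q L (gmon u0 u1 u2 u3) u3 e3 b 0 :=
  PP_exact (by rw [gm3, zpow_zero, one_smul])

theorem PP2 (C : Ctx q u0 u1 u2 u3 L) (b : Idx) :
    PP q L (gmon u0 u1 u2 u3) u2 e2 b (-2 * b.1) := by
  apply PP_exact
  obtain ⟨b3, b2, b1, b0⟩ := b
  simp only [gmon, ← mul_assoc, Prod.mk_add_mk, add_zero]
  rw [qcomm_pow C.hq C.rel.c23]
  simp [pow_succ', mul_assoc]

theorem PP1 (C : Ctx q u0 u1 u2 u3 L) (b : Idx) :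
    PP q L (gmon u0 u1 u2 u3) u1 e1 b (-2 * (b.1 + b.2.1)) := by
  obtain ⟨b3, b2, b1, b0⟩ := b
  induction b3 with
  | zero =>
    apply PP_exact
    simp only [gmon, ← mul_assoc, Prod.mk_add_mk, add_zero, pow_zero, one_mul, mul_one]
    rw [qcomm_pow C.hq C.rel.c12]
    simp [pow_succ', mul_assoc]
  | succ n ih =>
    have := PP_step C.hq C.qL C.qiL (sub_mem (pow_mem C.qiL 2) L.one_mem) C.rel.c13
      (gm3 _) (gm3 _) (fun b => ⟨_, PP3 b⟩) (fun b => ⟨_, PP2 C b⟩) (fun b => ⟨_, PP2 C b⟩) ?_ ih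
    · exact PP_congr rfl (by dsimp only; push_cast; ring) this
    · apply Sset_of_hgt
      · exact ⟨1, 0, by simp; omega⟩
      · simp [hgt]; omega

theorem PP0 (C : Ctx q u0 u1 u2 u3 L) (b : Idx) :
    PP q L (gmon u0 u1 u2 u3) u0 e0 b (-2 * (b.1 + b.2.1 + b.2.2.1)) := by
  obtain ⟨b3, b2, b1, b0⟩ := b
  induction b3 with
  | zero =>
    induction b2 with
    | zero =>
      apply PP_exact
      simp only [gmon, ← mul_assoc, Prod.mk_add_mk, add_zero, pow_zero, one_mul, mul_one]
      rw [qcomm_pow C.hq C.rel.c01]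
      simp [pow_succ', mul_assoc]
    | succ n ih =>
      have := PP_step C.hq C.qL C.qiL (sub_mem (pow_mem C.qiL 2) L.one_mem) C.rel.c02
        (gm2 _ _ _) (gm2 _ _ _)
        (fun b => ⟨_, PP2 C b⟩) (fun b => ⟨_, PP1 C b⟩) (fun b => ⟨_, PP1 C b⟩) ?_ ih
      · exact PP_congr rfl (by dsimp only; push_cast; ring) this
      · apply Sset_of_hgt
        · exact ⟨0, 1, by simp; omega⟩
        · simp [hgt]
  | succ n ih =>
    have := PP_step C.hq C.qL C.qiL (sub_mem (pow_mem C.qiL 4) L.one_mem) C.rel.c03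
      (gm3 _) (gm3 _) (fun b => ⟨_, PP3 b⟩) (fun b => ⟨_, PP2 C b⟩) (fun b => ⟨_, PP1 C b⟩) ?_ ih
    · exact PP_congr rfl (by dsimp only; push_cast; ring) this
    · apply Sset_of_hgt
      · exact ⟨1, 1, by simp; omega⟩
      · simp [hgt]; omega

/-- triangularity of `σ` on monomials -/
theorem sig_step (hq0 : q ≠ 0) (hq : q ∈ L) (hqi : q⁻¹ ∈ L) {m : Idx → R} {u : R} {e a : Idx}
    {k l d : ℤ} {σ : R → R} (hmul : ∀ x y, σ (x * y) = σ y * σ x) (hu : σ u = q ^ d • u)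
    (hm : m (a + e) = m a * u) (h : ∀ b, ∃ k, PP q L m u e b k) (hk : PP q L m u e a k)
    (hs : σ (m a) - q ^ l • m a ∈ WW L m (Sset a)) :
    σ (m (a + e)) - q ^ (d + k + l) • m (a + e) ∈ WW L m (Sset (a + e)) := by
  have e1 : σ (m (a + e)) - q ^ (d + k + l) • m (a + e) =
      q ^ d • (u * (σ (m a) - q ^ l • m a)) + q ^ (d + l) • (u * m a - q ^ k • m (a + e)) := by
    have : σ (m (a + e)) = q ^ d • (u * σ (m a)) := by
      rw [hm, hmul, hu, smul_mul_assoc]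
    rw [this]
    simp only [mul_sub, mul_smul_comm, smul_sub, zpow_add₀ hq0]
    module
  rw [e1]
  exact add_mem (WW_smul (zpow_L hq hqi _) (QQ_S hq hqi h hs)) (WW_smul (zpow_L hq hqi _) hk)

theorem sig_mon (C : Ctx q u0 u1 u2 u3 L) {σ : R → R} (hone : σ 1 = 1)
    (hmul : ∀ x y, σ (x * y) = σ y * σ x)
    (h0 : σ u0 = u0) (h1 : σ u1 = q ^ 2 • u1) (h2 : σ u2 = q ^ 4 • u2) (h3 : σ u3 = q ^ 6 • u3)
    (a : Idx) :
    σ (gmon u0 u1 u2 u3 a) - q ^ (6 * a.1 + 4 * a.2.1 + 2 * a.2.2.1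
      - 2 * (a.1 * a.2.1 + a.1 * a.2.2.1 + a.1 * a.2.2.2 + a.2.1 * a.2.2.1 + a.2.1 * a.2.2.2
        + a.2.2.1 * a.2.2.2) : ℤ) • gmon u0 u1 u2 u3 a ∈ WW L (gmon u0 u1 u2 u3) (Sset a) := by
  obtain ⟨a3, a2, a1, a0⟩ := a
  induction a0 with
  | zero =>
    induction a1 with
    | zero =>
      induction a2 with
      | zero =>
        induction a3 with
        | zero => simp [gmon, hone, zero_mem]
        | succ n ih =>
          have := sig_step (d := 6) C.hq C.qL C.qiL hmul (by rw [h3]; norm_cast) (e := e3)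
            (by simp [gmon, pow_succ]) (fun b => ⟨_, PP3 b⟩) (PP3 _) ih
          exact sig_congr rfl (by dsimp only; push_cast; ring) this
      | succ n ih =>
        have := sig_step (d := 4) C.hq C.qL C.qiL hmul (by rw [h2]; norm_cast) (e := e2)
          (by simp [gmon, pow_succ, mul_assoc]) (fun b => ⟨_, PP2 C b⟩) (PP2 C _) ih
        exact sig_congr rfl (by dsimp only; push_cast; ring) this
    | succ n ih =>
      have := sig_step (d := 2) C.hq C.qL C.qiL hmul (by rw [h1]; norm_cast) (e := e1)
        (by simp [gmon, pow_succ, mul_assoc]) (fun b => ⟨_, PP1 C b⟩) (PP1 C _) ih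
      exact sig_congr rfl (by dsimp only; push_cast; ring) this
  | succ n ih =>
    have := sig_step (d := 0) C.hq C.qL C.qiL hmul (by rw [h0]; simp) (e := e0)
      (by simp [gmon, pow_succ, mul_assoc]) (fun b => ⟨_, PP0 C b⟩) (PP0 C _) ih
    exact sig_congr rfl (by dsimp only; push_cast; ring) this

end strt


section dcb
variable {K : Type*} [Field K] {V : Type*} [AddCommGroup V] [Module K V]

/-- evaluation of integer polynomials -/
def ev (q : K) (p : Polynomial ℤ) : K := Polynomial.eval₂ (Int.castRingHom K) q p

theorem ev_add (q : K) (p r : Polynomial ℤ) : ev q (p + r) = ev q p + ev q r :=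
  Polynomial.eval₂_add _ _
theorem ev_mul (q : K) (p r : Polynomial ℤ) : ev q (p * r) = ev q p * ev q r :=
  Polynomial.eval₂_mul _ _
theorem ev_neg (q : K) (p : Polynomial ℤ) : ev q (-p) = -ev q p := by
  have h := ev_add q (-p) p
  rw [neg_add_cancel] at h
  have h0 : ev q 0 = 0 := Polynomial.eval₂_zero _ _
  rw [h0] at h
  exact eq_neg_of_add_eq_zero_left h.symm
theorem ev_zero (q : K) : ev q 0 = 0 := Polynomial.eval₂_zero _ _
theorem ev_one (q : K) : ev q 1 = 1 := Polynomial.eval₂_one _ _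
theorem ev_Xpow (q : K) (n : ℕ) : ev q (Polynomial.X ^ n) = q ^ n := by
  simp [ev]
theorem ev_C (q : K) (n : ℤ) : ev q (Polynomial.C n) = n := by
  unfold ev; rw [Polynomial.eval₂_C]; simp

theorem ev_bar {q : K} {bar : K →+* K} (hb : bar q = q⁻¹) (p : Polynomial ℤ) :
    bar (ev q p) = ev q⁻¹ p := by
  unfold ev
  rw [Polynomial.hom_eval₂, hb]
  congr 1
  exact RingHom.ext_int _ _

theorem ev_barbar {q : K} {bar : K →+* K} (hb : bar q = q⁻¹) (p : Polynomial ℤ) :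
    bar (bar (ev q p)) = ev q p := by
  unfold ev
  rw [Polynomial.hom_eval₂, Polynomial.hom_eval₂, hb, map_inv₀, hb, inv_inv]
  congr 1
  exact RingHom.ext_int _ _

theorem ev_rev {q : K} (hq : q ≠ 0) (p : Polynomial ℤ) :
    q ^ p.natDegree * ev q⁻¹ p = ev q p.reverse := by
  unfold ev
  have h4 : Invertible q⁻¹ := invertibleOfNonzero (inv_ne_zero hq)
  have h5 := Polynomial.eval₂_reverse_mul_pow (Int.castRingHom K) q⁻¹ p
  rw [invOf_eq_inv, inv_inv] at h5
  rw [← h5, inv_pow, mul_comm, mul_assoc, inv_mul_cancel₀ (pow_ne_zero _ hq), mul_one]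

/-- the Laurent polynomials `ℤ[q,q⁻¹]` -/
def LL (q : K) (hq : q ≠ 0) : Subring K where
  carrier := {f | ∃ (n : ℕ) (p : Polynomial ℤ), q ^ n * f = ev q p}
  mul_mem' := by
    rintro f g ⟨n, p, h⟩ ⟨m, r, h'⟩
    exact ⟨n + m, p * r, by rw [ev_mul, ← h, ← h']; ring⟩
  one_mem' := ⟨0, 1, by rw [ev_one]; simp⟩
  add_mem' := by
    rintro f g ⟨n, p, h⟩ ⟨m, r, h'⟩
    exact ⟨n + m, Polynomial.X ^ m * p + Polynomial.X ^ n * r, by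
      rw [ev_add, ev_mul, ev_mul, ← h, ← h', ev_Xpow, ev_Xpow]; ring⟩
  zero_mem' := ⟨0, 0, by rw [ev_zero]; simp⟩
  neg_mem' := by
    rintro f ⟨n, p, h⟩
    exact ⟨n, -p, by rw [ev_neg, ← h]; ring⟩

theorem LL_ev {q : K} (hq : q ≠ 0) (p : Polynomial ℤ) : ev q p ∈ LL q hq := ⟨0, p, by simp⟩

theorem LL_q {q : K} (hq : q ≠ 0) : q ∈ LL q hq :=
  ⟨0, Polynomial.X ^ 1, by rw [ev_Xpow]; simp⟩

theorem LL_qi {q : K} (hq : q ≠ 0) : q⁻¹ ∈ LL q hq :=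
  ⟨1, 1, by rw [ev_one]; simp [hq]⟩

theorem LL_bar {q : K} (hq : q ≠ 0) {bar : K →+* K} (hb : bar q = q⁻¹) {f : K}
    (hf : f ∈ LL q hq) : bar f ∈ LL q hq := by
  obtain ⟨n, p, h⟩ := hf
  have h1 := congrArg bar h
  rw [map_mul, map_pow, hb, ev_bar hb] at h1
  refine ⟨p.natDegree, Polynomial.X ^ n * p.reverse, ?_⟩
  rw [ev_mul, ev_Xpow, ← ev_rev hq, ← h1]
  have : q ^ n * (q⁻¹) ^ n = 1 := by rw [← mul_pow, mul_inv_cancel₀ hq, one_pow]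
  linear_combination (-(q ^ p.natDegree * bar f)) * this

theorem LL_barbar {q : K} (hq : q ≠ 0) {bar : K →+* K} (hb : bar q = q⁻¹) {f : K}
    (hf : f ∈ LL q hq) : bar (bar f) = f := by
  obtain ⟨n, p, h⟩ := hf
  have h1 := congrArg (fun x => bar (bar x)) h
  simp only [map_mul, map_pow, hb, map_inv₀, inv_inv, ev_barbar hb] at h1
  rw [← h] at h1
  exact mul_left_cancel₀ (pow_ne_zero _ hq) h1

theorem LL_dec {q : K} (hq : q ≠ 0) {bar : K →+* K} (hb : bar q = q⁻¹) {f : K}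
    (hf : f ∈ LL q hq) : ∃ (α : ℤ) (s t : Polynomial ℤ), f = α + q * ev q s + bar (q * ev q t) := by
  obtain ⟨n, p, h⟩ := hf
  have hf' : f = q⁻¹ ^ n * ev q p := by
    rw [← h, ← mul_assoc, ← mul_pow, inv_mul_cancel₀ hq, one_pow, one_mul]
  rw [hf']
  clear h hf' f
  induction p using Polynomial.induction_on' with
  | add p r hp hr =>
    obtain ⟨α, s, t, h⟩ := hp
    obtain ⟨α', s', t', h'⟩ := hr
    refine ⟨α + α', s + s', t + t', ?_⟩
    rw [ev_add, mul_add, h, h', ev_add, ev_add]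
    simp only [map_mul, map_add]
    push_cast; ring
  | monomial k c =>
    have e : ev q (Polynomial.monomial k c) = c * q ^ k := by
      rw [← Polynomial.C_mul_X_pow_eq_monomial, ev_mul, ev_C, ev_Xpow]
    rw [e]
    rcases lt_trichotomy n k with hk | hk | hk
    · obtain ⟨j, rfl⟩ := Nat.exists_eq_add_of_lt hk
      refine ⟨0, Polynomial.C c * Polynomial.X ^ j, 0, ?_⟩
      rw [ev_mul, ev_C, ev_Xpow, ev_zero, mul_zero, map_zero, inv_pow, pow_add, pow_add]
      field_simp
      push_cast; ring
    · subst hk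
      refine ⟨c, 0, 0, ?_⟩
      rw [ev_zero, mul_zero, map_zero, inv_pow]
      field_simp
      ring
    · obtain ⟨j, rfl⟩ := Nat.exists_eq_add_of_lt hk
      refine ⟨0, 0, Polynomial.C c * Polynomial.X ^ j, ?_⟩
      rw [ev_mul, ev_C, ev_Xpow, ev_zero, mul_zero, map_mul, map_mul, map_intCast, map_pow, hb,
        inv_pow, inv_pow, pow_add, pow_add]
      field_simp
      push_cast; ring

theorem LL_uniq {q : K} (hinj : ∀ p, ev q p = 0 → p = 0) (hq : q ≠ 0) {bar : K →+* K}
    (hb : bar q = q⁻¹) {α : ℤ} {s t : Polynomial ℤ}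
    (h : (α : K) + q * ev q s + bar (q * ev q t) = 0) : α = 0 ∧ s = 0 := by
  set n := t.natDegree with hn
  have h1 : ev q (Polynomial.C α * Polynomial.X ^ (n + 1) + s * Polynomial.X ^ (n + 2)
      + t.reverse) = 0 := by
    rw [ev_add, ev_add, ev_mul, ev_mul, ev_C, ev_Xpow, ev_Xpow, ← ev_rev hq, ← hn]
    rw [map_mul, hb, ev_bar hb] at h
    have hqq : q * q⁻¹ = 1 := mul_inv_cancel₀ hq
    linear_combination q ^ (n + 1) * h - q ^ n * ev q⁻¹ t * hqq
  have h2 := hinj _ h1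
  have hrev : ∀ k, n < k → t.reverse.coeff k = 0 := fun k hk =>
    Polynomial.coeff_eq_zero_of_natDegree_lt (lt_of_le_of_lt (Polynomial.reverse_natDegree_le t) hk)
  constructor
  · have := congrArg (fun p => Polynomial.coeff p (n + 1)) h2
    simpa [Polynomial.coeff_mul_X_pow', hrev] using this
  · ext k
    have := congrArg (fun p => Polynomial.coeff p (k + (n + 2))) h2
    simp only [Polynomial.coeff_add, Polynomial.coeff_mul_X_pow, Polynomial.coeff_C_mul_X_pow,
      hrev (k + (n + 2)) (by omega), Polynomial.coeff_zero] at this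
    rw [if_neg (by omega)] at this
    simpa using this

theorem LL_anti {q : K} (hinj : ∀ p, ev q p = 0 → p = 0) (hq : q ≠ 0) {bar : K →+* K}
    (hb : bar q = q⁻¹) {f : K} (hf : f ∈ LL q hq) (h : bar f = -f) :
    ∃ p, f = q * ev q p - bar (q * ev q p) := by
  obtain ⟨α, s, t, e⟩ := LL_dec hq hb hf
  have hbb : bar (bar (q * ev q t)) = q * ev q t :=
    LL_barbar hq hb (mul_mem (LL_q hq) (LL_ev hq t))
  have h1 : ((2 * α : ℤ) : K) + q * ev q (s + t) + bar (q * ev q (s + t)) = 0 := by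
    have e2 := h
    rw [e, map_add, map_add, hbb, map_intCast] at e2
    rw [ev_add, mul_add, map_add]
    push_cast
    linear_combination e2
  obtain ⟨h2, h3⟩ := LL_uniq hinj hq hb h1
  refine ⟨s, ?_⟩
  have h4 : α = 0 := by omega
  have h5 : t = -s := by rw [eq_neg_iff_add_eq_zero, add_comm]; exact h3
  rw [e, h4, h5, ev_neg, mul_neg, map_neg]
  push_cast; ring

theorem LL_symm {q : K} (hinj : ∀ p, ev q p = 0 → p = 0) (hq : q ≠ 0) {bar : K →+* K}
    (hb : bar q = q⁻¹) {p : Polynomial ℤ} (h : bar (q * ev q p) = q * ev q p) : p = 0 := by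
  have h1 : ((0 : ℤ) : K) + q * ev q p + bar (q * ev q (-p)) = 0 := by
    rw [ev_neg, mul_neg, map_neg, h]; push_cast; ring
  exact (LL_uniq hinj hq hb h1).2

end dcb

section dcb2
variable {K : Type*} [Field K] {V : Type*} [AddCommGroup V] [Module K V]

structure Dat (q : K) (hq : q ≠ 0) (bar : K →+* K) (E : Module.Basis Idx K V) (σ : V → V) :
    Prop where
  hinj : ∀ p, ev q p = 0 → p = 0
  hb : bar q = q⁻¹
  add : ∀ x y, σ (x + y) = σ x + σ y
  smul : ∀ (c : K) x, σ (c • x) = bar c • σ x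
  tr : ∀ a b, E.repr (σ (E a) - q ^ (-Nnum a) • E a) b ∈ LL q hq ∧
    (E.repr (σ (E a) - q ^ (-Nnum a) • E a) b ≠ 0 → b ∈ Sset a)
  sq : ∀ a, σ (σ (E a)) = E a

variable {q : K} {hq : q ≠ 0} {bar : K →+* K} {E : Module.Basis Idx K V} {σ : V → V}

theorem Dat.zero (D : Dat q hq bar E σ) : σ 0 = 0 := by
  have := D.add 0 0
  rw [add_zero] at this
  exact (left_eq_add.mp this)

theorem Dat.neg (D : Dat q hq bar E σ) (x : V) : σ (-x) = -σ x := by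
  rw [eq_neg_iff_add_eq_zero, ← D.add, neg_add_cancel, D.zero]

theorem Dat.sub (D : Dat q hq bar E σ) (x y : V) : σ (x - y) = σ x - σ y := by
  rw [sub_eq_add_neg, D.add, D.neg, ← sub_eq_add_neg]

/-- `σ` as an additive hom -/
def Dat.hom (D : Dat q hq bar E σ) : V →+ V := ⟨⟨σ, D.zero⟩, D.add⟩

theorem expand (x : V) : x = ∑ c ∈ (E.repr x).support, E.repr x c • E c := by
  have := E.linearCombination_repr x
  rw [Finsupp.linearCombination_apply, Finsupp.sum] at this
  exact this.symm

theorem Dat.sig (D : Dat q hq bar E σ) (x : V) :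
    σ x = ∑ c ∈ (E.repr x).support, bar (E.repr x c) • σ (E c) := by
  have h : σ x = D.hom (∑ c ∈ (E.repr x).support, E.repr x c • E c) := by
    rw [← expand x]; rfl
  rw [h, map_sum]
  exact Finset.sum_congr rfl fun c _ => D.smul _ _

theorem Dat.sig_repr (D : Dat q hq bar E σ) (x : V) (b : Idx) :
    E.repr (σ x) b = ∑ c ∈ (E.repr x).support, bar (E.repr x c) * E.repr (σ (E c)) b := by
  rw [D.sig x, map_sum, Finsupp.finsetSum_apply]
  exact Finset.sum_congr rfl fun c _ => by rw [map_smul]; rfl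

theorem Dat.trE (D : Dat q hq bar E σ) (a b : Idx) :
    E.repr (σ (E a)) b = E.repr (σ (E a) - q ^ (-Nnum a) • E a) b +
      q ^ (-Nnum a) * (if a = b then 1 else 0) := by
  rw [map_sub, map_smul, E.repr_self, Finsupp.sub_apply, Finsupp.smul_apply,
    Finsupp.single_apply, smul_eq_mul]
  ring

theorem Dat.tr_tri (D : Dat q hq bar E σ) {a b : Idx} (h : E.repr (σ (E a)) b ≠ 0) : tri a b := by
  rw [D.trE] at h
  by_cases hab : a = b
  · rw [hab]; exact tri_refl b
  · rw [if_neg hab, mul_zero, add_zero] at h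
    exact ((D.tr a b).2 h).1

theorem Dat.tr_self (D : Dat q hq bar E σ) (a : Idx) :
    E.repr (σ (E a)) a = q ^ (-Nnum a) := by
  rw [D.trE, if_pos rfl, mul_one]
  by_contra h
  have h2 : E.repr (σ (E a) - q ^ (-Nnum a) • E a) a ≠ 0 := by
    intro h3; rw [h3, zero_add] at h; exact h rfl
  exact ((D.tr a a).2 h2).2 rfl

theorem Dat.tr_L (D : Dat q hq bar E σ) (a b : Idx) : E.repr (σ (E a)) b ∈ LL q hq := by
  rw [D.trE]
  refine add_mem (D.tr a b).1 (mul_mem (zpow_L (LL_q hq) (LL_qi hq) _) ?_)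
  split_ifs
  · exact one_mem _
  · exact zero_mem _

theorem Dat.sig_supp (D : Dat q hq bar E σ) {x : V} {b : Idx} (h : E.repr (σ x) b ≠ 0) :
    ∃ c, E.repr x c ≠ 0 ∧ tri c b := by
  rw [D.sig_repr] at h
  obtain ⟨c, hc, h2⟩ := Finset.exists_ne_zero_of_sum_ne_zero h
  exact ⟨c, Finsupp.mem_support_iff.mp hc, D.tr_tri (right_ne_zero_of_mul h2)⟩

theorem Dat.sig_L (D : Dat q hq bar E σ) {x : V} (h : ∀ c, E.repr x c ∈ LL q hq) (b : Idx) :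
    E.repr (σ x) b ∈ LL q hq := by
  rw [D.sig_repr]
  exact sum_mem fun c _ => mul_mem (LL_bar hq D.hb (h c)) (D.tr_L c b)

theorem Dat.sig_top (D : Dat q hq bar E σ) {x : V} {n : ℕ} (h : ∀ c, E.repr x c ≠ 0 → hgt c ≤ n)
    {b : Idx} (hbn : n ≤ hgt b) : E.repr (σ x) b = q ^ (-Nnum b) * bar (E.repr x b) := by
  rw [D.sig_repr, Finset.sum_eq_single b]
  · rw [D.tr_self, mul_comm]
  · intro c hc hcb
    by_contra h2
    have h3 := D.tr_tri (right_ne_zero_of_mul h2)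
    have h4 := Sset_hgt (a := c) (b := b) ⟨h3, hcb⟩
    have h5 := h c (Finsupp.mem_support_iff.mp hc)
    omega
  · intro hb
    rw [Finsupp.notMem_support_iff.mp hb, map_zero, zero_mul]

theorem Dat.sigsig (D : Dat q hq bar E σ) {x : V} (h : ∀ c, E.repr x c ∈ LL q hq) :
    σ (σ x) = x := by
  have h1 : σ (σ x) = D.hom (∑ c ∈ (E.repr x).support, bar (E.repr x c) • σ (E c)) := by
    rw [← D.sig x]; rfl
  rw [h1, map_sum]
  conv_rhs => rw [expand (E := E) x]
  refine Finset.sum_congr rfl fun c _ => ?_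
  show σ _ = _
  rw [D.smul, D.sq, LL_barbar hq D.hb (h c)]

theorem Dat.bar_zpow (D : Dat q hq bar E σ) (n : ℤ) : bar (q ^ n) = q ^ (-n) := by
  rw [map_zpow₀, D.hb, inv_zpow, zpow_neg]

/-- `ψ = q^N σ` twice. -/
theorem Dat.psipsi (D : Dat q hq bar E σ) (n : ℤ) {x : V} (h : ∀ c, E.repr x c ∈ LL q hq) :
    q ^ n • σ (q ^ n • σ x) = x := by
  rw [D.smul, D.bar_zpow, smul_smul, ← zpow_add₀ hq, add_neg_cancel, zpow_zero, one_smul,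
    D.sigsig h]

theorem Dat.antisym (D : Dat q hq bar E σ) (a : Idx) (n : ℕ) : ∀ y : V,
    (∀ b, E.repr y b ∈ LL q hq) → (∀ b, E.repr y b ≠ 0 → b ∈ Sset a ∧ hgt b < n) →
    q ^ (Nnum a) • σ y = -y →
    ∃ s : V, (∀ b, ∃ p, E.repr s b = q * ev q p) ∧ (∀ b, E.repr s b ≠ 0 → b ∈ Sset a) ∧
      s - q ^ (Nnum a) • σ s = y := by
  induction n with
  | zero =>
    intro y _ h _
    have hy : y = 0 := by
      apply E.repr.injective
      ext b
      rw [map_zero]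
      by_contra h2
      exact absurd (h b h2).2 (by omega)
    refine ⟨0, fun b => ⟨0, ?_⟩, fun b hb => ?_, ?_⟩
    · rw [map_zero, ev_zero, mul_zero]; rfl
    · rw [map_zero] at hb; exact absurd rfl hb
    · rw [D.zero, hy, smul_zero, sub_zero]
  | succ n ih =>
    intro y hL hS hA
    have hp : ∀ b, ∃ p : Polynomial ℤ, (hgt b = n →
        E.repr y b = q * ev q p - bar (q * ev q p)) ∧ (¬ (hgt b = n ∧ E.repr y b ≠ 0) → p = 0) := by
      intro b
      by_cases hb : hgt b = n ∧ E.repr y b ≠ 0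
      · have h1 : bar (E.repr y b) = - E.repr y b := by
          have h2 := congrArg (fun x => E.repr x b) hA
          simp only [map_smul, map_neg, Finsupp.smul_apply, Finsupp.neg_apply, smul_eq_mul] at h2
          rw [D.sig_top (n := n) (fun c hc => by have := (hS c hc).2; omega) hb.1.ge,
            tri_Nnum (hS b hb.2).1.1, ← mul_assoc, ← zpow_add₀ hq, add_neg_cancel, zpow_zero,
            one_mul] at h2
          exact h2
        obtain ⟨p, hp⟩ := LL_anti D.hinj hq D.hb (hL b) h1
        exact ⟨p, fun _ => hp, fun h => absurd hb h⟩
      · refine ⟨0, fun h => ?_, fun _ => rfl⟩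
        rw [ev_zero, mul_zero, map_zero, sub_zero]
        by_contra h2
        exact hb ⟨h, h2⟩
    choose p hp1 hp2 using hp
    have hp3 : ∀ b, q * ev q (p b) ≠ 0 → hgt b = n ∧ E.repr y b ≠ 0 := by
      intro b h
      by_contra h2
      rw [hp2 b h2, ev_zero, mul_zero] at h
      exact h rfl
    obtain ⟨s', hs'⟩ : ∃ s' : V, ∀ b, E.repr s' b = q * ev q (p b) := by
      refine ⟨E.repr.symm (Finsupp.onFinset (E.repr y).support (fun b => q * ev q (p b))
        (fun b hb => Finsupp.mem_support_iff.mpr (hp3 b hb).2)), fun b => ?_⟩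
      rw [LinearEquiv.apply_symm_apply]; rfl
    have hs3 : ∀ b, E.repr s' b ≠ 0 → hgt b = n ∧ b ∈ Sset a := by
      intro b hb
      rw [hs'] at hb
      exact ⟨(hp3 b hb).1, (hS b (hp3 b hb).2).1⟩
    have hsL : ∀ b, E.repr s' b ∈ LL q hq := fun b => by
      rw [hs']; exact mul_mem (LL_q hq) (LL_ev hq _)
    have hσL : ∀ b, q ^ Nnum a * E.repr (σ s') b ∈ LL q hq := fun b =>
      mul_mem (zpow_L (LL_q hq) (LL_qi hq) _) (D.sig_L hsL b)
    set y' := y - s' + q ^ Nnum a • σ s' with hy'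
    have hy'r : ∀ b, E.repr y' b = E.repr y b - E.repr s' b + q ^ Nnum a * E.repr (σ s') b := by
      intro b
      rw [hy', map_add, map_sub, map_smul]; rfl
    have key := ih y' ?_ ?_ ?_
    · obtain ⟨s, h1, h2, h3⟩ := key
      refine ⟨s + s', fun b => ?_, fun b hb => ?_, ?_⟩
      · obtain ⟨r, hr⟩ := h1 b
        refine ⟨r + p b, ?_⟩
        rw [map_add, Finsupp.add_apply, hr, hs', ev_add, mul_add]
      · rw [map_add, Finsupp.add_apply] at hb
        by_cases hb2 : E.repr s b = 0
        · rw [hb2, zero_add] at hb; exact (hs3 b hb).2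
        · exact h2 b hb2
      · rw [D.add, smul_add]
        have : s + s' - (q ^ Nnum a • σ s + q ^ Nnum a • σ s')
          = (s - q ^ Nnum a • σ s) + s' - q ^ Nnum a • σ s' := by abel
        rw [this, h3, hy']; abel
    · intro b
      rw [hy'r]
      exact add_mem (sub_mem (hL b) (hsL b)) (hσL b)
    · intro b hb
      rw [hy'r] at hb
      have hSb : b ∈ Sset a ∧ hgt b < n + 1 := by
        by_cases c1 : E.repr y b = 0
        · by_cases c2 : E.repr s' b = 0
          · rw [c1, c2, sub_zero, zero_add] at hb
            obtain ⟨c, hc, hcb⟩ := D.sig_supp (right_ne_zero_of_mul hb)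
            have := tri_hgt hcb
            have h4 := hs3 c hc
            exact ⟨Sset_tri h4.2 hcb, by omega⟩
          · have := hs3 b c2
            exact ⟨this.2, by omega⟩
        · exact hS b c1
      refine ⟨hSb.1, ?_⟩
      by_contra hlt
      have hbn : hgt b = n := by omega
      apply hb
      rw [D.sig_top (n := n) (fun c hc => (hs3 c hc).1.le) hbn.ge, tri_Nnum hSb.1.1, ← mul_assoc,
        ← zpow_add₀ hq, add_neg_cancel, zpow_zero, one_mul, hp1 b hbn, hs']
      ring
    · rw [hy', D.add, D.sub, smul_add, smul_sub, hA, D.psipsi _ hsL]; abel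

theorem Dat.exist (D : Dat q hq bar E σ) (a : Idx) :
    ∃ s : V, (∀ b, ∃ p, E.repr s b = q * ev q p) ∧ (∀ b, E.repr s b ≠ 0 → b ∈ Sset a) ∧
      σ (E a + s) = q ^ (-Nnum a) • (E a + s) := by
  have hE : ∀ b, E.repr (E a) b ∈ LL q hq := by
    intro b
    rw [E.repr_self, Finsupp.single_apply]
    split_ifs
    · exact one_mem _
    · exact zero_mem _
  have hy : q ^ Nnum a • σ (E a) - E a = q ^ Nnum a • (σ (E a) - q ^ (-Nnum a) • E a) := by
    rw [smul_sub, smul_smul, ← zpow_add₀ hq, add_neg_cancel, zpow_zero, one_smul]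
  have key := D.antisym a (hgt a) (q ^ Nnum a • σ (E a) - E a) ?_ ?_ ?_
  · obtain ⟨s, h1, h2, h3⟩ := key
    refine ⟨s, h1, h2, ?_⟩
    have h4 : q ^ Nnum a • σ (E a + s) = E a + s := by
      rw [D.add, smul_add]
      have : q ^ Nnum a • σ s = s - (q ^ Nnum a • σ (E a) - E a) := by rw [← h3]; abel
      rw [this]; abel
    conv_rhs => rw [← h4]
    rw [smul_smul, ← zpow_add₀ hq, neg_add_cancel, zpow_zero, one_smul]
  · intro b
    rw [hy, map_smul]
    exact mul_mem (zpow_L (LL_q hq) (LL_qi hq) _) (D.tr a b).1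
  · intro b hb
    rw [hy, map_smul] at hb
    have := (D.tr a b).2 (right_ne_zero_of_mul hb)
    exact ⟨this, Sset_hgt this⟩
  · rw [D.sub, smul_sub, D.psipsi _ hE]; abel

theorem Dat.uniq (D : Dat q hq bar E σ) (a : Idx) {x : V} (h1 : ∀ b, ∃ p, E.repr x b = q * ev q p)
    (h2 : ∀ b, E.repr x b ≠ 0 → b ∈ Sset a) (h3 : σ x = q ^ (-Nnum a) • x) : x = 0 := by
  by_contra hx
  have hne : (E.repr x).support.Nonempty := by
    rw [Finsupp.support_nonempty_iff]
    intro h; exact hx (E.repr.map_eq_zero_iff.mp h)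
  obtain ⟨b, hb, hmax⟩ := Finset.exists_max_image _ hgt hne
  have hb0 := Finsupp.mem_support_iff.mp hb
  have h4 := congrArg (fun z => E.repr z b) h3
  simp only [map_smul, Finsupp.smul_apply, smul_eq_mul] at h4
  rw [D.sig_top (n := hgt b) (fun c hc => hmax c (Finsupp.mem_support_iff.mpr hc)) le_rfl,
    tri_Nnum (h2 b hb0).1] at h4
  have h5 := mul_left_cancel₀ (zpow_ne_zero _ hq) h4
  obtain ⟨p, hp⟩ := h1 b
  rw [hp] at h5
  have := LL_symm D.hinj hq D.hb h5
  rw [hp, this, ev_zero, mul_zero] at hb0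
  exact hb0 rfl

/-- generic form of condition (i) -/
def gcond (q : K) (m : Idx → V) (x : V) (a : Idx) : Prop :=
  ∃ φ : Idx →₀ Polynomial ℤ, (↑φ.support : Set Idx) ⊆ Sset a ∧
    x - m a = φ.sum fun b p => (q * Polynomial.eval₂ (Int.castRingHom K) q p) • m b

theorem sum_repr (φ : Idx →₀ Polynomial ℤ) (b : Idx) :
    E.repr (φ.sum fun b p => (q * Polynomial.eval₂ (Int.castRingHom K) q p) • E b) b
      = q * ev q (φ b) := by
  rw [Finsupp.sum, map_sum, Finsupp.finsetSum_apply, Finset.sum_eq_single b]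
  · rw [map_smul, E.repr_self, Finsupp.smul_apply, Finsupp.single_eq_same, smul_eq_mul, mul_one]
    rfl
  · intro c _ hc
    rw [map_smul, E.repr_self, Finsupp.smul_apply, Finsupp.single_eq_of_ne hc.symm, smul_zero]
  · intro h
    rw [Finsupp.notMem_support_iff.mp h, Polynomial.eval₂_zero, mul_zero, zero_smul, map_zero]
    rfl

theorem gcond_iff (x : V) (a : Idx) (hinj : ∀ p, ev q p = 0 → p = 0) (hq : q ≠ 0) :
    gcond q E x a ↔ (∀ b, ∃ p, E.repr (x - E a) b = q * ev q p) ∧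
      ∀ b, E.repr (x - E a) b ≠ 0 → b ∈ Sset a := by
  constructor
  · rintro ⟨φ, h1, h2⟩
    rw [h2]
    refine ⟨fun b => ⟨φ b, sum_repr φ b⟩, fun b hb => h1 ?_⟩
    rw [sum_repr] at hb
    rw [Finset.mem_coe, Finsupp.mem_support_iff]
    intro h; rw [h, ev_zero, mul_zero] at hb; exact hb rfl
  · rintro ⟨h1, h2⟩
    choose p hp using h1
    have hne : ∀ b, p b ≠ 0 → E.repr (x - E a) b ≠ 0 := by
      intro b h h3
      rw [hp] at h3
      exact h (hinj _ ((mul_eq_zero.mp h3).resolve_left hq))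
    refine ⟨Finsupp.onFinset (E.repr (x - E a)).support p
      (fun b hb => Finsupp.mem_support_iff.mpr (hne b hb)), fun b hb => ?_, ?_⟩
    · exact h2 b (hne b (by rw [Finset.mem_coe, Finsupp.mem_support_iff] at hb; exact hb))
    · apply E.repr.injective
      ext b
      rw [sum_repr, hp]; rfl

theorem tri_basis {B : Idx → V} (h : ∀ a b, E.repr (B a - E a) b ≠ 0 → b ∈ Sset a) :
    LinearIndependent K B ∧ Submodule.span K (Set.range B) = ⊤ := by
  constructor
  · rw [linearIndependent_iff]
    intro l hl
    by_contra hne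
    obtain ⟨a, ha, hmax⟩ := Finset.exists_max_image _ hgt (Finsupp.support_nonempty_iff.mpr hne)
    apply Finsupp.mem_support_iff.mp ha
    have h1 := congrArg (fun x => E.repr x a) hl
    simp only [map_zero, Finsupp.linearCombination_apply, Finsupp.sum, map_sum, map_smul,
      Finsupp.finsetSum_apply, Finsupp.smul_apply, Finsupp.zero_apply, smul_eq_mul] at h1
    have hB : ∀ c, E.repr (B c) a = E.repr (B c - E c) a + (if c = a then 1 else 0) := by
      intro c
      rw [map_sub, E.repr_self, Finsupp.sub_apply, Finsupp.single_apply]; ring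
    rw [Finset.sum_eq_single a] at h1
    · rw [hB, if_pos rfl] at h1
      have h2 : E.repr (B a - E a) a = 0 := by
        by_contra h2
        exact (h a a h2).2 rfl
      rwa [h2, zero_add, mul_one] at h1
    · intro c hc hca
      rw [hB, if_neg hca, add_zero]
      have h2 : E.repr (B c - E c) a = 0 := by
        by_contra h2
        have h3 := Sset_hgt (h c a h2)
        have h4 := hmax c hc
        omega
      rw [h2, mul_zero]
    · intro h2; exact absurd ha h2
  · rw [eq_top_iff, ← E.span_eq, Submodule.span_le]
    have key : ∀ n a, hgt a < n → E a ∈ Submodule.span K (Set.range B) := by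
      intro n
      induction n with
      | zero => intro a ha; omega
      | succ n ih =>
        intro a ha
        have h1 : E a = B a - (B a - E a) := by abel
        rw [h1]
        refine sub_mem (Submodule.subset_span ⟨a, rfl⟩) ?_
        rw [expand (E := E) (B a - E a)]
        refine sum_mem fun c hc => Submodule.smul_mem _ _ (ih c ?_)
        have := Sset_hgt (h a c (Finsupp.mem_support_iff.mp hc))
        omega
    rintro _ ⟨a, rfl⟩
    exact key (hgt a + 1) a (by omega)

theorem Dat.main (D : Dat q hq bar E σ) :
    (∃! B : Idx → V, ∀ a, gcond q E (B a) a ∧ σ (B a) = q ^ (-Nnum a) • B a) ∧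
    ∀ B : Idx → V, (∀ a, gcond q E (B a) a ∧ σ (B a) = q ^ (-Nnum a) • B a) →
      LinearIndependent K B ∧ Submodule.span K (Set.range B) = (⊤ : Submodule K V) := by
  constructor
  · choose s h1 h2 h3 using D.exist
    refine ⟨fun a => E a + s a, fun a => ⟨?_, h3 a⟩, ?_⟩
    · rw [gcond_iff _ _ D.hinj hq, add_sub_cancel_left]
      exact ⟨h1 a, h2 a⟩
    · intro B hB
      funext a
      have h4 := (gcond_iff _ _ D.hinj hq).mp (hB a).1
      have h5 : B a - (E a + s a) = 0 := by
        have e : B a - (E a + s a) = (B a - E a) - s a := by abel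
        refine D.uniq a ?_ ?_ ?_
        · intro b
          obtain ⟨p, hp⟩ := h4.1 b
          obtain ⟨r, hr⟩ := h1 a b
          refine ⟨p + -r, ?_⟩
          rw [e, map_sub, Finsupp.sub_apply, hp, hr, ev_add, ev_neg]; ring
        · intro b hb
          rw [e, map_sub, Finsupp.sub_apply] at hb
          by_cases hc : E.repr (B a - E a) b = 0
          · rw [hc, zero_sub] at hb
            exact h2 a b (neg_ne_zero.mp hb)
          · exact h4.2 b hc
        · rw [D.sub, (hB a).2, h3, smul_sub]
      exact sub_eq_zero.mp h5
  · intro B hB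
    exact tri_basis (E := E) fun a b => ((gcond_iff _ _ D.hinj hq).mp (hB a).1).2 b

end dcb2

section glue
variable {K : Type*} [Field K] {R : Type*} [Ring R] [Algebra K R]

theorem WW_span {L : Subring K} {m : Idx → R} {T : Set Idx} {x : R} (hx : x ∈ WW L m T) :
    x ∈ Submodule.span K (Set.range m) := by
  induction hx using AddSubgroup.closure_induction with
  | mem x hx =>
    obtain ⟨d, hd, b, hb, rfl⟩ := hx
    exact Submodule.smul_mem _ _ (Submodule.subset_span ⟨b, rfl⟩)
  | zero => exact zero_mem _
  | add x y _ _ hx hy => exact add_mem hx hy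
  | neg x _ hx => exact neg_mem hx

theorem WW_repr {q : K} {hq : q ≠ 0} {m : Idx → R} {T : Set Idx} {E : Module.Basis Idx K R}
    (w : Idx → ℕ) (hE : ∀ b, E b = q ^ w b • m b) {x : R} (hx : x ∈ WW (LL q hq) m T) (a : Idx) :
    E.repr x a ∈ LL q hq ∧ (E.repr x a ≠ 0 → a ∈ T) := by
  induction hx using AddSubgroup.closure_induction with
  | mem x hx =>
    obtain ⟨d, hd, b, hb, rfl⟩ := hx
    have h1 : d • m b = (d * q⁻¹ ^ w b) • E b := by
      rw [hE, smul_smul, mul_assoc, ← mul_pow, inv_mul_cancel₀ hq, one_pow, mul_one]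
    rw [h1, map_smul, E.repr_self, Finsupp.smul_apply, Finsupp.single_apply, smul_eq_mul]
    split_ifs with hab
    · subst hab
      rw [mul_one]
      exact ⟨mul_mem hd (pow_mem (LL_qi hq) _), fun _ => hb⟩
    · rw [mul_zero]
      exact ⟨zero_mem _, fun h => absurd rfl h⟩
  | zero => rw [map_zero]; exact ⟨zero_mem _, fun h => absurd rfl h⟩
  | add x y _ _ hx hy =>
    rw [map_add, Finsupp.add_apply]
    refine ⟨add_mem hx.1 hy.1, fun h => ?_⟩
    by_cases h2 : E.repr x a = 0
    · rw [h2, zero_add] at h; exact hy.2 h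
    · exact hx.2 h2
  | neg x _ hx =>
    rw [map_neg, Finsupp.neg_apply]
    exact ⟨neg_mem hx.1, fun h => hx.2 (neg_ne_zero.mp h)⟩

variable {q : K} {u0 u1 u2 u3 : R} {L : Subring K}

theorem gmon_span (C : Ctx q u0 u1 u2 u3 L)
    (hgen : Algebra.adjoin K ({u0, u1, u2, u3} : Set R) = ⊤) :
    ⊤ ≤ Submodule.span K (Set.range (gmon u0 u1 u2 u3)) := by
  set P := Submodule.span K (Set.range (gmon u0 u1 u2 u3)) with hP
  have step : ∀ u ∈ ({u0, u1, u2, u3} : Set R), ∀ b, u * gmon u0 u1 u2 u3 b ∈ P := by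
    intro u hu b
    rcases hu with rfl | rfl | rfl | rfl
    · exact WW_span (PP_weak C.qL C.qiL (PP0 C b))
    · exact WW_span (PP_weak C.qL C.qiL (PP1 C b))
    · exact WW_span (PP_weak C.qL C.qiL (PP2 C b))
    · exact WW_span (PP_weak C.qL C.qiL (PP3 b))
  have key : ∀ x ∈ Algebra.adjoin K ({u0, u1, u2, u3} : Set R), ∀ y ∈ P, x * y ∈ P := by
    intro x hx
    induction hx using Algebra.adjoin_induction with
    | mem x hx =>
      intro y hy
      induction hy using Submodule.span_induction with
      | mem y hy => obtain ⟨b, rfl⟩ := hy; exact step x hx b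
      | zero => rw [mul_zero]; exact zero_mem _
      | add y z _ _ hy hz => rw [mul_add]; exact add_mem hy hz
      | smul c y _ hy => rw [mul_smul_comm]; exact Submodule.smul_mem _ _ hy
    | algebraMap r =>
      intro y hy
      rw [← Algebra.smul_def]; exact Submodule.smul_mem _ _ hy
    | add x z _ _ hx hz => intro y hy; rw [add_mul]; exact add_mem (hx y hy) (hz y hy)
    | mul x z _ _ hx hz => intro y hy; rw [mul_assoc]; exact hx _ (hz y hy)
  intro x _
  have h1 : (1 : R) ∈ P := Submodule.subset_span ⟨(0, 0, 0, 0), by simp [gmon]⟩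
  have := key x (by rw [hgen]; trivial) 1 h1
  rwa [mul_one] at this

theorem bexp_two (a : Idx) : 2 * (bexp a : ℤ) =
    a.1 * (a.1 - 1) + a.2.1 * (a.2.1 - 1) + a.2.2.1 * (a.2.2.1 - 1) + a.2.2.2 * (a.2.2.2 - 1) := by
  have h : ∀ n : ℕ, 2 * (Nat.choose n 2 : ℤ) = n * (n - 1) := by
    intro n
    induction n with
    | zero => simp
    | succ n ih =>
      rw [Nat.choose_succ_succ' n 1, Nat.choose_one_right]
      push_cast
      linear_combination ih
  unfold bexp
  push_cast
  linear_combination h a.1 + h a.2.1 + h a.2.2.1 + h a.2.2.2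

theorem glue_main (hq : q ≠ 0) (hinj : ∀ p, ev q p = 0 → p = 0) (rel : Rels q u0 u1 u2 u3)
    (hgen : Algebra.adjoin K ({u0, u1, u2, u3} : Set R) = ⊤)
    (hli : LinearIndependent K (gmon u0 u1 u2 u3)) (bar : K →+* K) (σ : R → R)
    (hb : bar q = q⁻¹) (hbij : Function.Bijective σ) (hadd : ∀ x y, σ (x + y) = σ x + σ y)
    (hmul : ∀ x y, σ (x * y) = σ y * σ x) (hsm : ∀ (c : K) x, σ (c • x) = bar c • σ x)
    (h0 : σ u0 = u0) (h1 : σ u1 = q ^ 2 • u1) (h2 : σ u2 = q ^ 4 • u2) (h3 : σ u3 = q ^ 6 • u3) :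
    (∃! B : Idx → R, ∀ a, gcond q (fun a => q ^ bexp a • gmon u0 u1 u2 u3 a) (B a) a ∧
      σ (B a) = q ^ (-Nnum a) • B a) ∧
    ∀ B : Idx → R, (∀ a, gcond q (fun a => q ^ bexp a • gmon u0 u1 u2 u3 a) (B a) a ∧
      σ (B a) = q ^ (-Nnum a) • B a) →
      LinearIndependent K B ∧ Submodule.span K (Set.range B) = (⊤ : Submodule K R) := by
  have C : Ctx q u0 u1 u2 u3 (LL q hq) := ⟨hq, rel, LL_q hq, LL_qi hq⟩
  let M : Module.Basis Idx K R := Module.Basis.mk hli (gmon_span C hgen)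
  let E : Module.Basis Idx K R :=
    M.isUnitSMul (w := fun a => q ^ bexp a) (fun a => IsUnit.mk0 _ (pow_ne_zero _ hq))
  have hE : ∀ a, E a = q ^ bexp a • gmon u0 u1 u2 u3 a := by
    intro a
    rw [Module.Basis.isUnitSMul_apply, Module.Basis.mk_apply]
  have hone : σ 1 = 1 := by
    obtain ⟨y, hy⟩ := hbij.2 1
    have := hmul y 1
    rw [mul_one, hy, mul_one] at this
    exact this.symm
  have hss : ∀ n : ℕ, ∀ u : R, σ u = q ^ n • u → σ (σ u) = u := by
    intro n u hu
    rw [hu, hsm, hu, smul_smul, map_pow, hb, ← mul_pow, inv_mul_cancel₀ hq, one_pow, one_smul]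
  have hpow : ∀ u : R, σ (σ u) = u → ∀ n : ℕ, σ (σ (u ^ n)) = u ^ n := by
    intro u hu n
    induction n with
    | zero => rw [pow_zero, hone, hone]
    | succ n ih => rw [pow_succ, hmul, hmul, ih, hu]
  have hmon : ∀ a, σ (σ (gmon u0 u1 u2 u3 a)) = gmon u0 u1 u2 u3 a := by
    intro a
    unfold gmon
    simp only [hmul]
    rw [hpow u3 (hss 6 _ h3), hpow u2 (hss 4 _ h2), hpow u1 (hss 2 _ h1),
      hpow u0 (by rw [h0, h0])]
  have D : Dat q hq bar E σ := by
    refine ⟨hinj, hb, hadd, hsm, fun a => ?_, fun a => ?_⟩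
    · apply WW_repr bexp hE
      have hs := sig_mon C hone hmul h0 h1 h2 h3 a
      have hbL : bar (q ^ bexp a) ∈ LL q hq := LL_bar hq hb (pow_mem (LL_q hq) _)
      have hfin := WW_smul hbL hs
      have e : σ (E a) - q ^ (-Nnum a) • E a = bar (q ^ bexp a) • (σ (gmon u0 u1 u2 u3 a) -
          q ^ (6 * a.1 + 4 * a.2.1 + 2 * a.2.2.1
            - 2 * (a.1 * a.2.1 + a.1 * a.2.2.1 + a.1 * a.2.2.2 + a.2.1 * a.2.2.1 + a.2.1 * a.2.2.2
            + a.2.2.1 * a.2.2.2) : ℤ) • gmon u0 u1 u2 u3 a) := by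
        rw [hE, hsm, smul_sub, smul_smul, smul_smul]
        congr 2
        have hbq : bar (q ^ bexp a) = q ^ (-(bexp a : ℤ)) := by
          rw [map_pow, hb, inv_pow, zpow_neg, zpow_natCast]
        rw [hbq, ← zpow_natCast q (bexp a), ← zpow_add₀ hq, ← zpow_add₀ hq]
        congr 1
        have := bexp_two a
        unfold Nnum
        linear_combination this
      rw [e]; exact hfin
    · rw [hE, hsm, hsm, hmon, map_pow, map_pow, hb, map_inv₀, hb, inv_inv]
  have hfun : (fun a => q ^ bexp a • gmon u0 u1 u2 u3 a) = ⇑E := funext fun a => (hE a).symm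
  rw [hfun]
  exact D.main

end glue

theorem us_gen : Algebra.adjoin F ({us0, us1, us2, us3} : Set Sgen) = ⊤ := by
  have h := Algebra.adjoin_adjoin_coe_preimage (R := F) (s := ({u0, u1, u2, u3} : Set U))
  rw [← h]
  congr 1
  ext x
  simp only [Set.mem_preimage, Set.mem_insert_iff, Set.mem_singleton_iff, Subtype.ext_iff]
  rfl

/-- There exists a unique family `B : ℕ⁴ → S` such that for every `a ∈ ℕ⁴`:
(i) `B[a] − E[a] ∈ Σ_{b ∈ S(a)} qℤ[q]·E[b]`, and (ii) `σ(B[a]) = q^{−N(a)}B[a]`.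
Moreover the family `{B[a] : a ∈ ℕ⁴}` is an `F`-basis of `S` (the dual canonical basis). -/
theorem stmt8 (bar : F →+* F) (σ : Sgen → Sgen)
    (hPBW : LinearIndependent F mon) (hσ : SigmaHyp bar σ) :
    (∃! B : Idx → Sgen, DCB bar σ B) ∧
    ∀ B : Idx → Sgen, DCB bar σ B →
      LinearIndependent F B ∧ Submodule.span F (Set.range B) = (⊤ : Submodule F Sgen) := by
  obtain ⟨hb, hbij, hadd, hmul, hsm, h0, h1, h2, h3⟩ := hσ
  exact glue_main (q := qq) (u0 := us0) (u1 := us1) (u2 := us2) (u3 := us3) qq_ne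
    (fun p hp => ev_inj p hp) rels_S us_gen hPBW bar σ hb hbij hadd hmul hsm h0 h1 h2 h3
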